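/- If a(0) = (a_1(0), a_2(0), …) ∈ ℓ², then the solution a(t) of the shell model given by the generating function representation satisfies ‖a(t)‖_{ℓ²} = ‖a(0)‖_{ℓ²} for all t ≥ 0; i.e., energy is exactly conserved for finite-energy initial data. -/

import Mathlib

/-!
Write `τ = tanh t`. The passage from `G₀` to `G(·, t)` is the weighted composition operator
`F ↦ √(1 - |τ|²) / (1 - z τ̄) · F (φ z)` with `φ z = (z - τ) / (1 - z τ̄)`. Pairing a
square-summable sequence with the Szegő kernel `k_w = (w̄ⁿ)ₙ` evaluates its generating function at
`w`, so the adjoint of this operator sends each `k_w` to a multiple of `k_{φ(w)}`. The Szegő kernels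
and their images have the same Gram matrix, hence the adjoint is an isometry and the operator itself
does not increase the `ℓ²` norm. Its inverse is the operator of the same kind with parameter `-τ`,
so the norm is in fact preserved.
-/

open scoped InnerProductSpace ComplexConjugate ENNReal
open Metric

section Gram

variable {𝕜 H H' ι : Type*} [RCLike 𝕜]
  [NormedAddCommGroup H] [InnerProductSpace 𝕜 H]
  [NormedAddCommGroup H'] [InnerProductSpace 𝕜 H'] {k : ι → H} {k' : ι → H'}

lemma norm_linearCombination_eq_of_inner_eq
    (hgram : ∀ i j, ⟪k' i, k' j⟫_𝕜 = ⟪k i, k j⟫_𝕜) (c : ι →₀ 𝕜) :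
    ‖Finsupp.linearCombination 𝕜 k' c‖ = ‖Finsupp.linearCombination 𝕜 k c‖ := by
  simp only [norm_eq_sqrt_re_inner (𝕜 := 𝕜), Finsupp.linearCombination_apply, Finsupp.sum,
    sum_inner, inner_sum, inner_smul_left, inner_smul_right, hgram]

lemma exists_linearIsometry_of_inner_eq [CompleteSpace H']
    (hdense : Dense (Submodule.span 𝕜 (Set.range k) : Set H))
    (hgram : ∀ i j, ⟪k' i, k' j⟫_𝕜 = ⟪k i, k j⟫_𝕜) :
    ∃ V : H →ₗᵢ[𝕜] H', ∀ i, V (k i) = k' i := by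
  let L := Finsupp.linearCombination 𝕜 k
  let L' := Finsupp.linearCombination 𝕜 k'
  have hL : DenseRange L := by
    rwa [DenseRange, ← LinearMap.coe_range, Finsupp.range_linearCombination]
  have hnorm (c) : ‖L' c‖ = ‖L c‖ := norm_linearCombination_eq_of_inner_eq hgram c
  let V : H →L[𝕜] H' := L'.extendOfNorm L
  have hVL (c) : V (L c) = L' c :=
    LinearMap.extendOfNorm_eq hL ⟨1, fun c => by rw [one_mul, hnorm]⟩ c
  have hV : (fun x => ‖V x‖) = norm :=
    hL.equalizer V.continuous.norm continuous_norm (funext fun c => by simp [hVL, hnorm])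
  refine ⟨⟨V, congrFun hV⟩, fun i => ?_⟩
  simpa [L, L'] using hVL (Finsupp.single i 1)

end Gram

section SquareSummable

variable {ι : Type*} {E : ι → Type*} [∀ i, NormedAddCommGroup (E i)]

lemma memℓp_two_of_tsum_enorm_sq_ne_top {x : ∀ i, E i} (h : ∑' i, ‖x i‖ₑ ^ 2 ≠ ⊤) :
    Memℓp x 2 := by
  refine memℓp_gen ?_
  simpa using ENNReal.summable_toReal h

lemma tsum_enorm_sq_eq_enorm_sq (x : lp E 2) : ∑' i, ‖x i‖ₑ ^ 2 = ‖x‖ₑ ^ 2 := by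
  have h : HasSum (fun i => ‖x i‖ ^ 2) (‖x‖ ^ 2) := by
    simpa using lp.hasSum_norm (p := 2) (by norm_num) x
  have h' := ENNReal.ofReal_tsum_of_nonneg (fun i => sq_nonneg ‖x i‖) h.summable
  simpa [h.tsum_eq, ENNReal.ofReal_pow] using h'.symm

lemma toReal_tsum_enorm_sq (x : ∀ i, E i) :
    (∑' i, ‖x i‖ₑ ^ 2).toReal = ∑' i, ‖x i‖ ^ 2 := by
  rw [ENNReal.tsum_toReal_eq fun i => by finiteness]
  simp

end SquareSummable

/-- `F` is the generating function `∑ aₙ zⁿ` of the sequence `a` on the open unit disc; the series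
is required to converge there, while the values of `F` off the disc are irrelevant. -/
def IsGeneratingFunction {𝕜 : Type*} [NormedField 𝕜] (a : ℕ → 𝕜) (F : 𝕜 → 𝕜) : Prop :=
  ∀ z ∈ ball (0 : 𝕜) 1, HasSum (fun n => a n * z ^ n) (F z)

lemma IsGeneratingFunction.congr {𝕜 : Type*} [NormedField 𝕜] {a : ℕ → 𝕜} {F F' : 𝕜 → 𝕜}
    (hF : IsGeneratingFunction a F) (h : Set.EqOn F F' (ball 0 1)) : IsGeneratingFunction a F' :=
  fun z hz => h hz ▸ hF z hz

lemma IsGeneratingFunction.unique {𝕜 : Type*} [NontriviallyNormedField 𝕜] {a b : ℕ → 𝕜}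
    {F : 𝕜 → 𝕜} (ha : IsGeneratingFunction a F) (hb : IsGeneratingFunction b F) : a = b := by
  have hasFPowerSeriesAt {c : ℕ → 𝕜} (hc : IsGeneratingFunction c F) :
      HasFPowerSeriesAt F (FormalMultilinearSeries.ofScalars 𝕜 c) 0 := by
    rw [hasFPowerSeriesAt_iff]
    filter_upwards [ball_mem_nhds (0 : 𝕜) one_pos] with z hz
    simpa [FormalMultilinearSeries.coeff_ofScalars, mul_comm] using hc z hz
  exact FormalMultilinearSeries.ofScalars_series_injective (𝕜 := 𝕜) (E := 𝕜)
    ((hasFPowerSeriesAt ha).eq_formalMultilinearSeries (hasFPowerSeriesAt hb))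

section SzegoKernel

variable {𝕜 : Type*} [RCLike 𝕜]

/-- The Szegő kernel `k_w = (w̄ⁿ)ₙ` at a point `w` of the open unit disc, the reproducing kernel of
the Hardy space once a function is identified with its sequence of Taylor coefficients. -/
noncomputable def szegoKernel (w : ball (0 : 𝕜) 1) : lp (fun _ : ℕ => 𝕜) 2 :=
  ⟨fun n => conj (w : 𝕜) ^ n, memℓp_gen <| by
    have hw : ‖(w : 𝕜)‖ < 1 := mem_ball_zero_iff.1 w.2
    have h : ‖(w : 𝕜)‖ ^ 2 < 1 := by nlinarith [norm_nonneg (w : 𝕜)]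
    simpa [← pow_mul, mul_comm] using summable_geometric_of_lt_one (sq_nonneg _) h⟩

lemma hasSum_inner_szegoKernel (f : lp (fun _ : ℕ => 𝕜) 2) (w : ball (0 : 𝕜) 1) :
    HasSum (fun n => f n * (w : 𝕜) ^ n) ⟪szegoKernel w, f⟫_𝕜 := by
  simpa [szegoKernel] using lp.hasSum_inner (𝕜 := 𝕜) (szegoKernel w) f

lemma IsGeneratingFunction.inner_szegoKernel {f : lp (fun _ : ℕ => 𝕜) 2} {F : 𝕜 → 𝕜}
    (hF : IsGeneratingFunction f F) (w : ball (0 : 𝕜) 1) : ⟪szegoKernel w, f⟫_𝕜 = F w :=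
  (hasSum_inner_szegoKernel f w).unique (hF w w.2)

lemma inner_szegoKernel_szegoKernel (w v : ball (0 : 𝕜) 1) :
    ⟪szegoKernel w, szegoKernel v⟫_𝕜 = (1 - w * conj (v : 𝕜))⁻¹ := by
  refine (hasSum_inner_szegoKernel (szegoKernel v) w).unique ?_
  have hw : ‖(w : 𝕜)‖ < 1 := mem_ball_zero_iff.1 w.2
  have hv : ‖(v : 𝕜)‖ < 1 := mem_ball_zero_iff.1 v.2
  have h : ‖w * conj (v : 𝕜)‖ < 1 := by
    simpa using mul_lt_one_of_nonneg_of_lt_one_left (norm_nonneg _) hw hv.le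
  simpa [szegoKernel, mul_pow, mul_comm] using hasSum_geometric_of_norm_lt_one h

lemma dense_span_range_szegoKernel :
    Dense (Submodule.span 𝕜 (Set.range (szegoKernel (𝕜 := 𝕜))) : Set (lp (fun _ : ℕ => 𝕜) 2)) := by
  rw [Submodule.dense_iff_topologicalClosure_eq_top, Submodule.topologicalClosure_eq_top_iff,
    Submodule.eq_bot_iff]
  intro x hx
  have h : IsGeneratingFunction x 0 := fun w hw => by
    have hperp : ⟪szegoKernel ⟨w, hw⟩, x⟫_𝕜 = 0 :=
      hx _ (Submodule.subset_span (Set.mem_range_self _))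
    simpa [hperp] using hasSum_inner_szegoKernel x ⟨w, hw⟩
  have h0 : IsGeneratingFunction (0 : ℕ → 𝕜) 0 := fun w _ => by simp
  exact Subtype.ext (h.unique h0)

end SzegoKernel

section DiscAutomorphism

variable {𝕜 : Type*} [RCLike 𝕜] {τ z w : 𝕜}

/-- The automorphism `φ z = (z - τ) / (1 - z τ̄)` of the open unit disc that sends `τ` to `0`. -/
noncomputable def discAutomorphism (τ z : 𝕜) : 𝕜 := (z - τ) / (1 - z * conj τ)

lemma one_sub_mul_conj_ne_zero (hz : z ∈ ball 0 1) (hw : w ∈ ball 0 1) : 1 - z * conj w ≠ 0 := by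
  rw [mem_ball_zero_iff] at hz hw
  refine sub_ne_zero.2 fun h => ?_
  have hlt : ‖z * conj w‖ < 1 := by
    simpa using mul_lt_one_of_nonneg_of_lt_one_left (norm_nonneg _) hz hw.le
  simp [← h] at hlt

lemma one_sub_discAutomorphism_mul_conj (hτ : τ ∈ ball 0 1) (hz : z ∈ ball 0 1)
    (hw : w ∈ ball 0 1) :
    1 - discAutomorphism τ z * conj (discAutomorphism τ w) =
      (1 - τ * conj τ) * (1 - z * conj w) / ((1 - z * conj τ) * conj (1 - w * conj τ)) := by
  have hzτ := one_sub_mul_conj_ne_zero hz hτ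
  have hτw := one_sub_mul_conj_ne_zero hτ hw
  simp only [discAutomorphism, map_div₀, map_sub, map_mul, map_one, RCLike.conj_conj,
    mul_comm (conj w) τ]
  field_simp
  ring

lemma discAutomorphism_mem_ball (hτ : τ ∈ ball 0 1) (hz : z ∈ ball 0 1) :
    discAutomorphism τ z ∈ ball 0 1 := by
  have h : 1 - ‖discAutomorphism τ z‖ ^ 2 =
      (1 - ‖τ‖ ^ 2) * (1 - ‖z‖ ^ 2) / ‖1 - z * conj τ‖ ^ 2 := by
    have := one_sub_discAutomorphism_mul_conj hτ hz hz
    simp only [RCLike.mul_conj] at this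
    exact_mod_cast this
  have hpos : 0 < ‖1 - z * conj τ‖ := norm_pos_iff.2 (one_sub_mul_conj_ne_zero hz hτ)
  rw [mem_ball_zero_iff] at hτ hz ⊢
  have hτ' : 0 < 1 - ‖τ‖ ^ 2 := by nlinarith [norm_nonneg τ]
  have hz' : 0 < 1 - ‖z‖ ^ 2 := by nlinarith [norm_nonneg z]
  have : 0 < 1 - ‖discAutomorphism τ z‖ ^ 2 := h ▸ by positivity
  nlinarith

lemma one_sub_discAutomorphism_neg_mul_conj (hτ : τ ∈ ball 0 1) (hz : z ∈ ball 0 1) :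
    1 - discAutomorphism (-τ) z * conj τ = (1 - τ * conj τ) / (1 - z * conj (-τ)) := by
  have h := one_sub_mul_conj_ne_zero hz (w := -τ) (by simpa using hτ)
  rw [discAutomorphism]
  field_simp
  simp only [map_neg]
  ring

lemma discAutomorphism_discAutomorphism_neg (hτ : τ ∈ ball 0 1) (hz : z ∈ ball 0 1) :
    discAutomorphism τ (discAutomorphism (-τ) z) = z := by
  have h := one_sub_mul_conj_ne_zero hz (w := -τ) (by simpa using hτ)
  have hττ := one_sub_mul_conj_ne_zero hτ hτ
  rw [discAutomorphism, one_sub_discAutomorphism_neg_mul_conj hτ hz, discAutomorphism]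
  field_simp
  simp only [map_neg]
  ring

end DiscAutomorphism

section MoebiusTransform

variable {𝕜 : Type*} [RCLike 𝕜] {τ : 𝕜} {a b : ℕ → 𝕜} {F : 𝕜 → 𝕜}

/-- The weighted composition operator `F ↦ √(1 - |τ|²) / (1 - z τ̄) · F (φ z)` on the Hardy space of
the disc, where `φ` is the disc automorphism sending `τ` to `0`. -/
noncomputable def moebiusTransform (τ : 𝕜) (F : 𝕜 → 𝕜) (z : 𝕜) : 𝕜 :=
  (√(1 - ‖τ‖ ^ 2) : ℝ) / (1 - z * conj τ) * F (discAutomorphism τ z)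

lemma ofReal_sqrt_one_sub_norm_sq_mul_self (hτ : τ ∈ ball 0 1) :
    ((√(1 - ‖τ‖ ^ 2) : ℝ) : 𝕜) * (√(1 - ‖τ‖ ^ 2) : ℝ) = 1 - τ * conj τ := by
  rw [mem_ball_zero_iff] at hτ
  rw [← RCLike.ofReal_mul, Real.mul_self_sqrt (by nlinarith [norm_nonneg τ]), RCLike.mul_conj]
  push_cast
  rfl

lemma moebiusTransform_neg_moebiusTransform (hτ : τ ∈ ball 0 1) :
    Set.EqOn (moebiusTransform (-τ) (moebiusTransform τ F)) F (ball 0 1) := by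
  intro z hz
  have h := one_sub_mul_conj_ne_zero hz (w := -τ) (by simpa using hτ)
  have hττ := one_sub_mul_conj_ne_zero hτ hτ
  simp only [moebiusTransform, discAutomorphism_discAutomorphism_neg hτ hz,
    one_sub_discAutomorphism_neg_mul_conj hτ hz, norm_neg]
  rw [← ofReal_sqrt_one_sub_norm_sq_mul_self hτ] at hττ ⊢
  have hsqrt := left_ne_zero_of_mul hττ
  field_simp

/-- The image of the Szegő kernel at `w` under the adjoint of `moebiusTransform τ`. -/
noncomputable def moebiusKernel (τ w : ball (0 : 𝕜) 1) : lp (fun _ : ℕ => 𝕜) 2 :=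
  conj ((√(1 - ‖(τ : 𝕜)‖ ^ 2) : ℝ) / (1 - w * conj (τ : 𝕜)) : 𝕜) •
    szegoKernel ⟨discAutomorphism (τ : 𝕜) w, discAutomorphism_mem_ball τ.2 w.2⟩

lemma IsGeneratingFunction.inner_moebiusKernel {f : lp (fun _ : ℕ => 𝕜) 2}
    (hF : IsGeneratingFunction f F) (τ w : ball (0 : 𝕜) 1) :
    ⟪moebiusKernel τ w, f⟫_𝕜 = moebiusTransform (τ : 𝕜) F w := by
  rw [moebiusKernel, inner_smul_left, RCLike.conj_conj, hF.inner_szegoKernel, moebiusTransform]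

lemma inner_moebiusKernel_moebiusKernel (τ w v : ball (0 : 𝕜) 1) :
    ⟪moebiusKernel τ w, moebiusKernel τ v⟫_𝕜 = ⟪szegoKernel w, szegoKernel v⟫_𝕜 := by
  have hττ := one_sub_mul_conj_ne_zero τ.2 τ.2
  have hwτ : 1 - conj (τ : 𝕜) * w ≠ 0 := mul_comm (w : 𝕜) _ ▸ one_sub_mul_conj_ne_zero w.2 τ.2
  have hvτ := (map_ne_zero (starRingEnd 𝕜)).2 (one_sub_mul_conj_ne_zero v.2 τ.2)
  have hwv := one_sub_mul_conj_ne_zero w.2 v.2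
  simp only [moebiusKernel, inner_smul_left, inner_smul_right, inner_szegoKernel_szegoKernel,
    one_sub_discAutomorphism_mul_conj τ.2 w.2 v.2, RCLike.conj_conj, map_div₀, RCLike.conj_ofReal]
  rw [← ofReal_sqrt_one_sub_norm_sq_mul_self τ.2] at hττ ⊢
  have hsqrt := left_ne_zero_of_mul hττ
  field_simp

lemma exists_norm_le_isGeneratingFunction_moebiusTransform {f : lp (fun _ : ℕ => 𝕜) 2}
    (hτ : τ ∈ ball 0 1) (hF : IsGeneratingFunction f F) :
    ∃ g : lp (fun _ : ℕ => 𝕜) 2, ‖g‖ ≤ ‖f‖ ∧ IsGeneratingFunction g (moebiusTransform τ F) := by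
  obtain ⟨V, hV⟩ := exists_linearIsometry_of_inner_eq
    (k' := moebiusKernel ⟨τ, hτ⟩) dense_span_range_szegoKernel
    (inner_moebiusKernel_moebiusKernel ⟨τ, hτ⟩)
  let A := V.toContinuousLinearMap.adjoint
  have hA : ‖A‖ ≤ 1 := by simpa [A] using V.norm_toContinuousLinearMap_le
  refine ⟨A f, by simpa using A.le_of_opNorm_le hA f, fun w hw => ?_⟩
  have h : ⟪szegoKernel ⟨w, hw⟩, A f⟫_𝕜 = moebiusTransform τ F w := by
    rw [ContinuousLinearMap.adjoint_inner_right, LinearIsometry.coe_toContinuousLinearMap, hV,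
      hF.inner_moebiusKernel]
  exact h ▸ hasSum_inner_szegoKernel (A f) ⟨w, hw⟩

lemma tsum_enorm_sq_le_of_moebiusTransform (hτ : τ ∈ ball 0 1) (ha : IsGeneratingFunction a F)
    (hb : IsGeneratingFunction b (moebiusTransform τ F)) :
    ∑' n, ‖b n‖ₑ ^ 2 ≤ ∑' n, ‖a n‖ₑ ^ 2 := by
  obtain htop | hfin := eq_or_ne (∑' n, ‖a n‖ₑ ^ 2) ⊤
  · exact htop ▸ le_top
  obtain ⟨f, rfl⟩ : ∃ f : lp (fun _ : ℕ => 𝕜) 2, ⇑f = a :=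
    ⟨⟨a, memℓp_two_of_tsum_enorm_sq_ne_top hfin⟩, rfl⟩
  obtain ⟨g, hgf, hg⟩ := exists_norm_le_isGeneratingFunction_moebiusTransform hτ ha
  rw [hb.unique hg, tsum_enorm_sq_eq_enorm_sq, tsum_enorm_sq_eq_enorm_sq]
  gcongr
  exact enorm_le_iff_norm_le.2 hgf

theorem tsum_enorm_sq_eq_of_moebiusTransform (hτ : τ ∈ ball 0 1) (ha : IsGeneratingFunction a F)
    (hb : IsGeneratingFunction b (moebiusTransform τ F)) :
    ∑' n, ‖b n‖ₑ ^ 2 = ∑' n, ‖a n‖ₑ ^ 2 :=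
  le_antisymm (tsum_enorm_sq_le_of_moebiusTransform hτ ha hb) <|
    tsum_enorm_sq_le_of_moebiusTransform (by simpa using hτ) hb
      (ha.congr (moebiusTransform_neg_moebiusTransform hτ).symm)

end MoebiusTransform

lemma sqrt_one_sub_tanh_sq (t : ℝ) : √(1 - Real.tanh t ^ 2) = 1 / Real.cosh t := by
  have hcosh := Real.cosh_pos t
  have h : 1 - Real.tanh t ^ 2 = (1 / Real.cosh t) ^ 2 := by
    rw [Real.tanh_eq_sinh_div_cosh]
    field_simp
    linarith [Real.cosh_sq t]
  rw [h, Real.sqrt_sq (one_div_pos.2 hcosh).le]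

theorem stmt11_general {𝕜 : Type*} [RCLike 𝕜] {a b : ℕ → 𝕜} {G : 𝕜 → 𝕜}
    (ha : IsGeneratingFunction a G) (t : ℝ)
    (hb : IsGeneratingFunction b fun z =>
      (1 / (1 - z * (Real.tanh t : 𝕜))) *
        G ((z - (Real.tanh t : 𝕜)) / (1 - z * (Real.tanh t : 𝕜))) / (Real.cosh t : 𝕜)) :
    ∑' n, ‖b n‖ₑ ^ 2 = ∑' n, ‖a n‖ₑ ^ 2 := by
  have hτ : (Real.tanh t : 𝕜) ∈ ball 0 1 := by simpa using Real.abs_tanh_lt_one t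
  refine tsum_enorm_sq_eq_of_moebiusTransform hτ ha (hb.congr fun z _ => ?_)
  simp only [moebiusTransform, discAutomorphism, RCLike.conj_ofReal, RCLike.norm_ofReal, sq_abs,
    sqrt_one_sub_tanh_sq]
  push_cast
  ring

/-- Energy conservation for finite-energy data: if the initial data
`a(0) = (a_1(0), a_2(0), …)` is square-summable, and `a_n(t)` are the Taylor
coefficients of `G(z,t) = ψ_t(z) G₀(φ_t(z))/cosh t` where `G₀` is the generating
function of the initial data, then `∑ |a_n(t)|² = ∑ |a_n(0)|²` for all `t ≥ 0`.
(Here `a₀ n` stands for `a_{n+1}(0)` and `a n t` for `a_{n+1}(t)`.) -/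
theorem stmt11 (a₀ : ℕ → ℝ) (hsq : Summable (fun n : ℕ => (a₀ n) ^ 2))
    (G₀ : ℂ → ℂ)
    (hG₀ : ∀ z ∈ Metric.ball (0 : ℂ) 1, HasSum (fun n : ℕ => (a₀ n : ℂ) * z ^ n) (G₀ z))
    (a : ℕ → ℝ → ℝ)
    (ha : ∀ t : ℝ, 0 ≤ t → ∀ z ∈ Metric.ball (0 : ℂ) 1,
      HasSum (fun n : ℕ => (a n t : ℂ) * z ^ n)
        ((1 / (1 - z * Real.tanh t)) *
          G₀ ((z - Real.tanh t) / (1 - z * Real.tanh t)) / Real.cosh t)) :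
    ∀ t : ℝ, 0 ≤ t → ∑' n : ℕ, (a n t) ^ 2 = ∑' n : ℕ, (a₀ n) ^ 2 := by
  intro t ht
  simpa [toReal_tsum_enorm_sq] using congrArg ENNReal.toReal (stmt11_general hG₀ t (ha t ht))
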